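/- arXiv:1304.0947 — 2 statements merged into one kernel-verified Lean document; each statement's English description precedes it below -/
import Mathlib

section
/- Let I ⊆ ℝ[x,y] be an ideal, and assume that (viewing ℝ[x,y] ⊆ ℂ[z,z̄]) I ⊆ I(a,b) for some a ≠ b in ℂⁿ, or I ⊆ J(a,U) for some a ∈ ℂⁿ and some nonzero positive semidefinite hermitian n×n matrix U. Then there exists f ∈ ℝ[x,y] such that f > 0 at every point of V_ℝ(I), but f ∉ Σ_h + I, i.e., f is not a sum of hermitian squares modulo I. -/
open MvPolynomial Complex Matrix MeasureTheory ComplexOrder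

noncomputable section

universe u

/-- `ℂ[z,z̄]`: the polynomial ring in the `2n` variables `z_j` (encoded `Sum.inl j`)
and `z̄_j` (encoded `Sum.inr j`). -/
abbrev CPoly (n : ℕ) := MvPolynomial (Fin n ⊕ Fin n) ℂ

/-- The involution `f ↦ f*`: conjugate the coefficients and swap `z_j ↔ z̄_j`. -/
def hermStar (n : ℕ) : CPoly n →+* CPoly n :=
  (MvPolynomial.rename (Sum.swap : Fin n ⊕ Fin n → Fin n ⊕ Fin n)).toRingHom.comp
    (MvPolynomial.map (starRingEnd ℂ))

/-- The inclusion of the holomorphic polynomials `ℂ[z]` into `ℂ[z,z̄]`. -/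
def hol (n : ℕ) : MvPolynomial (Fin n) ℂ →ₐ[ℂ] CPoly n :=
  MvPolynomial.rename Sum.inl

/-- Evaluation `f(a,b)` (substituting `a` for `z` and `b` for `z̄`). -/
def evalPair {n : ℕ} (a b : Fin n → ℂ) (f : CPoly n) : ℂ :=
  MvPolynomial.eval (Sum.elim a b) f

/-- Evaluation `f(a) := f(a, ā)`. -/
def evalAt {n : ℕ} (a : Fin n → ℂ) (f : CPoly n) : ℂ :=
  evalPair a (fun j => (starRingEnd ℂ) (a j)) f

/-- `‖z‖² = |z_1|² + ⋯ + |z_n|²`. -/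
def normZ (n : ℕ) : CPoly n := ∑ j : Fin n, X (Sum.inl j) * X (Sum.inr j)

/-- `Σ_h`: hermitian sums of squares `∑ |p_i|²`, `p_i ∈ ℂ[z]` holomorphic. -/
def SigmaH (n : ℕ) : Set (CPoly n) :=
  {f | ∃ (k : ℕ) (p : Fin k → MvPolynomial (Fin n) ℂ),
    f = ∑ i, hol n (p i) * hermStar n (hol n (p i))}

/-- `Σ`: sums of squares `∑ |p_i|²`, `p_i ∈ ℂ[z,z̄]`. -/
def SigmaFull (n : ℕ) : Set (CPoly n) :=
  {f | ∃ (k : ℕ) (p : Fin k → CPoly n), f = ∑ i, p i * hermStar n (p i)}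

/-- Ideals `I ⊆ ℝ[x,y]`, viewed as sets of `*`-fixed elements of `ℂ[z,z̄]`. -/
def IsRealIdeal (n : ℕ) (I : Set (CPoly n)) : Prop :=
  (∀ f ∈ I, hermStar n f = f) ∧ (0 : CPoly n) ∈ I ∧
    (∀ f ∈ I, ∀ g ∈ I, f + g ∈ I) ∧
    ∀ f : CPoly n, hermStar n f = f → ∀ g ∈ I, f * g ∈ I

/-- The semiring `Σ_h + I`. -/
def SigmaHPlus (n : ℕ) (I : Set (CPoly n)) : Set (CPoly n) :=
  {f | ∃ s ∈ SigmaH n, ∃ g ∈ I, f = s + g}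

/-- The real zero set `V_ℝ(I) ⊆ ℂⁿ`. -/
def VR (n : ℕ) (I : Set (CPoly n)) : Set (Fin n → ℂ) :=
  {a | ∀ f ∈ I, evalAt a f = 0}

/-- A subset `M` of `ℝ[x,y]` is archimedean if for every real `f` there is `c ∈ ℝ`
with `c ± f ∈ M`. -/
def IsArchSet (n : ℕ) (M : Set (CPoly n)) : Prop :=
  ∀ f : CPoly n, hermStar n f = f →
    ∃ c : ℝ, (C (c : ℂ) + f) ∈ M ∧ (C (c : ℂ) - f) ∈ M

/-- Hermitian modules in `ℝ[x,y]`. -/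
def IsHermitianModule (n : ℕ) (M : Set (CPoly n)) : Prop :=
  (∀ f ∈ M, hermStar n f = f) ∧ (1 : CPoly n) ∈ M ∧
    (∀ f ∈ M, ∀ g ∈ M, f + g ∈ M) ∧
    ∀ s ∈ SigmaH n, ∀ f ∈ M, s * f ∈ M

/-- The closed set `X_M ⊆ ℂⁿ` associated with a hermitian module. -/
def XM (n : ℕ) (M : Set (CPoly n)) : Set (Fin n → ℂ) :=
  {a | ∀ g ∈ M, 0 ≤ (evalAt a g).re}

/-- Hereditary calculus `ψ_T` for a tuple of bounded operators:
`ψ_T(z^α z̄^β) = T^{*β} T^α` (adjoints to the left). -/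
def psiOp {n : ℕ} {E : Type u} [NormedAddCommGroup E] [InnerProductSpace ℂ E]
    [CompleteSpace E] (T : Fin n → E →L[ℂ] E) (f : CPoly n) : E →L[ℂ] E :=
  ∑ m ∈ f.support, f.coeff m •
    ((List.ofFn fun j => (ContinuousLinearMap.adjoint (T j)) ^ (m (Sum.inr j))).prod *
     (List.ofFn fun j => (T j) ^ (m (Sum.inl j))).prod)

/-- Hereditary calculus `ψ_T` for a tuple of matrices. -/
def psiMat {n m : ℕ} (T : Fin n → Matrix (Fin m) (Fin m) ℂ) (f : CPoly n) :
    Matrix (Fin m) (Fin m) ℂ :=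
  ∑ mo ∈ f.support, f.coeff mo •
    ((List.ofFn fun j => ((T j)ᴴ) ^ (mo (Sum.inr j))).prod *
     (List.ofFn fun j => (T j) ^ (mo (Sum.inl j))).prod)

/-- A commuting tuple `T` on a Hilbert space `E` is subnormal if it extends to a
commuting tuple of bounded normal operators on a larger Hilbert space `E'`,
leaving (the image of) `E` invariant. -/
def IsSubnormal {n : ℕ} {E : Type u} [NormedAddCommGroup E] [InnerProductSpace ℂ E]
    [CompleteSpace E] (T : Fin n → E →L[ℂ] E) : Prop :=
  ∃ (E' : Type u) (_ : NormedAddCommGroup E') (_ : InnerProductSpace ℂ E')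
    (_ : CompleteSpace E') (ι : E →ₗᵢ[ℂ] E') (N : Fin n → E' →L[ℂ] E'),
      (∀ i j, Commute (N i) (N j)) ∧
      (∀ j, Commute (N j) (ContinuousLinearMap.adjoint (N j))) ∧
      ∀ j x, N j (ι x) = ι (T j x)

/-- The "diamond" ideal `I(a,b)`. -/
def Iab {n : ℕ} (a b : Fin n → ℂ) : Set (CPoly n) :=
  {f | evalPair a (fun j => (starRingEnd ℂ) (a j)) f = 0 ∧
       evalPair a (fun j => (starRingEnd ℂ) (b j)) f = 0 ∧
       evalPair b (fun j => (starRingEnd ℂ) (a j)) f = 0 ∧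
       evalPair b (fun j => (starRingEnd ℂ) (b j)) f = 0}

/-- The degenerate ideal `J(a,U)`. -/
def Jau {n : ℕ} (a : Fin n → ℂ) (U : Matrix (Fin n) (Fin n) ℂ) : Set (CPoly n) :=
  {f | evalAt a f = 0 ∧
    U.mulVec (fun k => evalAt a (pderiv (Sum.inl k) f)) = 0 ∧
    (U.map (starRingEnd ℂ)).mulVec (fun k => evalAt a (pderiv (Sum.inr k) f)) = 0 ∧
    Matrix.trace
      (U * Matrix.of fun j k => evalAt a (pderiv (Sum.inr k) (pderiv (Sum.inl j) f))) = 0}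

/-! A linear functional `φ` on `ℂ[z,z̄]` which is nonnegative on `Σ_h` may well be negative on the
square of a real polynomial `q`, because `q` is not holomorphic. If moreover `φ` vanishes on `I`,
then `q² + ε` lies outside `Σ_h + I` for small `ε > 0`, although it is positive on all of `ℂⁿ`.
In both cases some `q = 2 Re p` with `p` holomorphic of degree one will do.

For `I(a,b)` take `φ f = f(a,ā) + f(a,b̄) + f(b,ā) + f(b,b̄)`, so that `φ(|p|²) = |p(a) + p(b)|²`.
If `p(a) = i` and `p(b) = 0`, then `q` vanishes at `a` and `b` but equals `±i` at `(a,b̄)` and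
`(b,ā)`, whence `φ(q²) = -2`.

For `J(a,U)` and a vector `v`, take the combination `φ f` of derivatives of `f` at `a` such that
`φ(|p|²) = w* U w` with `w = ∇p(a) + p(a) v`. If `q(a) = -1` and `∇p(a) = v`, then
`φ(q²) = -v* U v`. -/

variable {n : ℕ}

section HermStar

lemma hermStar_C (c : ℂ) : hermStar n (C c) = C (star c) := by
  simp [hermStar]

lemma hermStar_X (i : Fin n ⊕ Fin n) : hermStar n (X i) = X i.swap := by
  simp [hermStar]

lemma hermStar_hermStar (f : CPoly n) : hermStar n (hermStar n f) = f := by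
  induction f using MvPolynomial.induction_on with
  | C c => simp only [hermStar_C, star_star]
  | add p q hp hq => simp only [map_add, hp, hq]
  | mul_X p i hp => simp only [map_mul, hermStar_X, hp, Sum.swap_swap]

lemma pderiv_hermStar (i : Fin n ⊕ Fin n) (f : CPoly n) :
    pderiv i (hermStar n f) = hermStar n (pderiv i.swap f) := by
  change pderiv i (rename Sum.swap (map (starRingEnd ℂ) f)) =
    rename Sum.swap (map (starRingEnd ℂ) (pderiv i.swap f))
  rw [← pderiv_map, ← pderiv_rename Sum.swap_leftInverse.injective, Sum.swap_swap]

lemma pderiv_inl_hol (k : Fin n) (p : MvPolynomial (Fin n) ℂ) :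
    pderiv (Sum.inl k) (hol n p) = hol n (pderiv k p) :=
  pderiv_rename Sum.inl_injective k p

lemma pderiv_inr_hol (k : Fin n) (p : MvPolynomial (Fin n) ℂ) :
    pderiv (Sum.inr k) (hol n p) = 0 := by
  refine pderiv_eq_zero_of_notMem_vars fun hk => ?_
  obtain ⟨_, _, h⟩ := Finset.mem_image.mp (vars_rename Sum.inl p hk)
  exact Sum.inl_ne_inr h

/-- The real polynomial `2 Re p = p + p*` attached to a holomorphic polynomial `p`. -/
def twoRe (p : MvPolynomial (Fin n) ℂ) : CPoly n := hol n p + hermStar n (hol n p)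

lemma hermStar_twoRe (p : MvPolynomial (Fin n) ℂ) : hermStar n (twoRe p) = twoRe p := by
  rw [twoRe, map_add, hermStar_hermStar, add_comm]

end HermStar

section Evaluation

/-- The evaluation `f ↦ f(a,b)` as an algebra homomorphism. -/
def evalPairHom (a b : Fin n → ℂ) : CPoly n →ₐ[ℂ] ℂ := aeval (Sum.elim a b)

lemma evalPairHom_apply (a b : Fin n → ℂ) (f : CPoly n) : evalPairHom a b f = evalPair a b f :=
  DFunLike.congr_fun (coe_aeval_eq_eval _) f

/-- The evaluation `f ↦ f(a,ā)` as an algebra homomorphism. -/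
def evalAtHom (a : Fin n → ℂ) : CPoly n →ₐ[ℂ] ℂ := evalPairHom a (star a)

lemma evalAtHom_apply (a : Fin n → ℂ) (f : CPoly n) : evalAtHom a f = evalAt a f :=
  evalPairHom_apply a (star a) f

lemma evalPairHom_hol (a b : Fin n → ℂ) (p : MvPolynomial (Fin n) ℂ) :
    evalPairHom a b (hol n p) = aeval a p := by
  simp [evalPairHom, hol, aeval_rename]

lemma evalPairHom_hermStar (a b : Fin n → ℂ) (f : CPoly n) :
    evalPairHom a b (hermStar n f) = star (evalPairHom (star b) (star a) f) := by
  induction f using MvPolynomial.induction_on with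
  | C c => simp [evalPairHom, hermStar_C]
  | add p q hp hq => simp only [map_add, hp, hq, star_add]
  | mul_X p i hp =>
    have hX : evalPairHom a b (hermStar n (X i)) = star (evalPairHom (star b) (star a) (X i)) := by
      rcases i with i | i <;> simp [hermStar_X, evalPairHom]
    rw [map_mul, map_mul, map_mul, hp, hX, star_mul']

lemma evalAtHom_hermStar (a : Fin n → ℂ) (f : CPoly n) :
    evalAtHom a (hermStar n f) = star (evalAtHom a f) := by
  simp only [evalAtHom, evalPairHom_hermStar, star_star]

lemma evalPairHom_twoRe (a b : Fin n → ℂ) (p : MvPolynomial (Fin n) ℂ) :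
    evalPairHom a (star b) (twoRe p) = aeval a p + star (aeval b p) := by
  rw [twoRe, map_add, evalPairHom_hermStar, star_star, evalPairHom_hol, evalPairHom_hol]

lemma evalAtHom_mul_self_nonneg {q : CPoly n} (hq : hermStar n q = q) (a : Fin n → ℂ) :
    0 ≤ evalAtHom a (q * q) := by
  have hreal : IsSelfAdjoint (evalAtHom a q) := by
    rw [IsSelfAdjoint, ← evalAtHom_hermStar, hq]
  simpa only [map_mul] using hreal.mul_self_nonneg

end Evaluation

section Separation

lemma not_mem_SigmaHPlus_of_map_neg {F : Type*} [FunLike F (CPoly n) ℂ]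
    [AddMonoidHomClass F (CPoly n) ℂ] {I : Set (CPoly n)} (φ : F)
    (hφ : ∀ p, 0 ≤ φ (hol n p * hermStar n (hol n p))) (hI : ∀ g ∈ I, φ g = 0)
    {f : CPoly n} (hf : (φ f).re < 0) : f ∉ SigmaHPlus n I := by
  rintro ⟨_, ⟨k, p, rfl⟩, g, hg, rfl⟩
  rw [map_add, hI g hg, add_zero, map_sum] at hf
  exact hf.not_ge (Complex.le_def.mp (Finset.sum_nonneg fun i _ => hφ (p i))).1

lemma exists_pos_not_mem_SigmaHPlus {I : Set (CPoly n)} (φ : CPoly n →ₗ[ℂ] ℂ)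
    (hφ : ∀ p, 0 ≤ φ (hol n p * hermStar n (hol n p))) (hI : ∀ g ∈ I, φ g = 0)
    {q : CPoly n} (hq : hermStar n q = q) (hneg : (φ (q * q)).re < 0) :
    ∃ f : CPoly n, hermStar n f = f ∧ (∀ x, 0 < (evalAt x f).re) ∧ f ∉ SigmaHPlus n I := by
  obtain ⟨ε, hε, hε_lt⟩ := exists_pos_mul_lt (neg_pos.mpr hneg) (φ 1).re
  have hC : C (ε : ℂ) = (ε : ℂ) • (1 : CPoly n) := by rw [smul_eq_C_mul, mul_one]
  refine ⟨C (ε : ℂ) + q * q, ?_, fun x => ?_, not_mem_SigmaHPlus_of_map_neg φ hφ hI ?_⟩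
  · rw [map_add, map_mul, hq, hermStar_C, Complex.star_def, Complex.conj_ofReal]
  · have hsq : 0 ≤ (evalAtHom x (q * q)).re :=
      (Complex.le_def.mp (evalAtHom_mul_self_nonneg hq x)).1
    rw [← evalAtHom_apply, map_add, hC, map_smul, map_one, smul_eq_mul, mul_one, Complex.add_re,
      Complex.ofReal_re]
    exact add_pos_of_pos_of_nonneg hε hsq
  · rw [map_add, hC, map_smul, smul_eq_mul, Complex.add_re, Complex.re_ofReal_mul]
    linarith

end Separation

section Diamond

lemma mem_Iab_iff {a b : Fin n → ℂ} {f : CPoly n} :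
    f ∈ Iab a b ↔ evalPairHom a (star a) f = 0 ∧ evalPairHom a (star b) f = 0 ∧
      evalPairHom b (star a) f = 0 ∧ evalPairHom b (star b) f = 0 :=
  Iff.rfl

/-- The sum of the four evaluations whose common kernel is the ideal `I(a,b)`. -/
def diamondFunctional (a b : Fin n → ℂ) : CPoly n →ₗ[ℂ] ℂ :=
  (evalPairHom a (star a)).toLinearMap + (evalPairHom a (star b)).toLinearMap +
    (evalPairHom b (star a)).toLinearMap + (evalPairHom b (star b)).toLinearMap

lemma diamondFunctional_apply (a b : Fin n → ℂ) (f : CPoly n) :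
    diamondFunctional a b f = evalPairHom a (star a) f + evalPairHom a (star b) f +
      evalPairHom b (star a) f + evalPairHom b (star b) f := rfl

lemma diamondFunctional_eq_zero {a b : Fin n → ℂ} {g : CPoly n} (hg : g ∈ Iab a b) :
    diamondFunctional a b g = 0 := by
  obtain ⟨haa, hab, hba, hbb⟩ := mem_Iab_iff.mp hg
  rw [diamondFunctional_apply, haa, hab, hba, hbb, add_zero, add_zero, add_zero]

lemma diamondFunctional_hol_mul_hermStar (a b : Fin n → ℂ) (p : MvPolynomial (Fin n) ℂ) :
    diamondFunctional a b (hol n p * hermStar n (hol n p)) =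
      (aeval a p + aeval b p) * star (aeval a p + aeval b p) := by
  simp only [diamondFunctional_apply, map_mul, evalPairHom_hermStar, evalPairHom_hol, star_star,
    star_add]
  ring

lemma diamondFunctional_twoRe_mul_self {a b : Fin n → ℂ} {p : MvPolynomial (Fin n) ℂ}
    (ha : aeval a p = I) (hb : aeval b p = 0) :
    diamondFunctional a b (twoRe p * twoRe p) = -2 := by
  simp only [diamondFunctional_apply, map_mul, evalPairHom_twoRe, ha, hb, star_zero, star_def,
    conj_I, add_neg_cancel, zero_add, add_zero, mul_zero, neg_mul_neg, I_mul_I]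
  norm_num

lemma exists_aeval_eq_and_aeval_eq_zero {σ K : Type*} [Field K] {a b : σ → K} (hab : a ≠ b)
    (c : K) : ∃ p : MvPolynomial σ K, aeval a p = c ∧ aeval b p = 0 := by
  obtain ⟨j, hj⟩ := Function.ne_iff.mp hab
  refine ⟨C (c / (a j - b j)) * (X j - C (b j)), ?_, by simp⟩
  simp [div_mul_cancel₀ c (sub_ne_zero.mpr hj)]

lemma exists_pos_not_mem_SigmaHPlus_of_subset_Iab {I : Set (CPoly n)} {a b : Fin n → ℂ}
    (hab : a ≠ b) (hI : I ⊆ Iab a b) :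
    ∃ f : CPoly n, hermStar n f = f ∧ (∀ x, 0 < (evalAt x f).re) ∧ f ∉ SigmaHPlus n I := by
  obtain ⟨p, hpa, hpb⟩ := exists_aeval_eq_and_aeval_eq_zero hab Complex.I
  refine exists_pos_not_mem_SigmaHPlus (diamondFunctional a b) (fun r => ?_)
    (fun g hg => diamondFunctional_eq_zero (hI hg)) (hermStar_twoRe p) ?_
  · rw [diamondFunctional_hol_mul_hermStar]
    exact mul_star_self_nonneg _
  · rw [diamondFunctional_twoRe_mul_self hpa hpb]
    norm_num

end Diamond

section Jet

/-- The holomorphic gradient `∇_z f(a,ā)`. -/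
def holGrad (a : Fin n → ℂ) : CPoly n →ₗ[ℂ] Fin n → ℂ :=
  LinearMap.pi fun k => (evalAtHom a).toLinearMap ∘ₗ (pderiv (Sum.inl k)).toLinearMap

/-- The antiholomorphic gradient `∇_z̄ f(a,ā)`. -/
def antiholGrad (a : Fin n → ℂ) : CPoly n →ₗ[ℂ] Fin n → ℂ :=
  LinearMap.pi fun k => (evalAtHom a).toLinearMap ∘ₗ (pderiv (Sum.inr k)).toLinearMap

/-- The mixed Hessian `∇²_{zz̄} f(a,ā)`, with rows indexed by `z` and columns by `z̄`. -/
def mixedHessian (a : Fin n → ℂ) : CPoly n →ₗ[ℂ] Matrix (Fin n) (Fin n) ℂ :=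
  LinearMap.pi fun j => antiholGrad a ∘ₗ (pderiv (Sum.inl j)).toLinearMap

lemma holGrad_apply (a : Fin n → ℂ) (f : CPoly n) (k : Fin n) :
    holGrad a f k = evalAtHom a (pderiv (Sum.inl k) f) := rfl

lemma antiholGrad_apply (a : Fin n → ℂ) (f : CPoly n) (k : Fin n) :
    antiholGrad a f k = evalAtHom a (pderiv (Sum.inr k) f) := rfl

lemma mixedHessian_apply (a : Fin n → ℂ) (f : CPoly n) (j k : Fin n) :
    mixedHessian a f j k = evalAtHom a (pderiv (Sum.inr k) (pderiv (Sum.inl j) f)) := rfl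

lemma holGrad_mul (a : Fin n → ℂ) (f g : CPoly n) :
    holGrad a (f * g) = evalAtHom a g • holGrad a f + evalAtHom a f • holGrad a g := by
  ext k
  simp only [holGrad_apply, pderiv_mul, map_add, map_mul, Pi.add_apply, Pi.smul_apply, smul_eq_mul]
  ring

lemma antiholGrad_mul (a : Fin n → ℂ) (f g : CPoly n) :
    antiholGrad a (f * g) =
      evalAtHom a g • antiholGrad a f + evalAtHom a f • antiholGrad a g := by
  ext k
  simp only [antiholGrad_apply, pderiv_mul, map_add, map_mul, Pi.add_apply, Pi.smul_apply,
    smul_eq_mul]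
  ring

lemma mixedHessian_mul (a : Fin n → ℂ) (f g : CPoly n) :
    mixedHessian a (f * g) =
      evalAtHom a g • mixedHessian a f + evalAtHom a f • mixedHessian a g +
        vecMulVec (holGrad a f) (antiholGrad a g) + vecMulVec (holGrad a g) (antiholGrad a f) := by
  ext j k
  simp only [mixedHessian_apply, holGrad_apply, antiholGrad_apply, pderiv_mul, map_add, map_mul,
    Matrix.add_apply, Matrix.smul_apply, vecMulVec_apply, smul_eq_mul]
  ring

lemma holGrad_hermStar (a : Fin n → ℂ) (f : CPoly n) :
    holGrad a (hermStar n f) = star (antiholGrad a f) := by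
  ext k
  simp only [holGrad_apply, antiholGrad_apply, Pi.star_apply, pderiv_hermStar, evalAtHom_hermStar,
    Sum.swap_inl]

lemma antiholGrad_hermStar (a : Fin n → ℂ) (f : CPoly n) :
    antiholGrad a (hermStar n f) = star (holGrad a f) := by
  ext k
  simp only [holGrad_apply, antiholGrad_apply, Pi.star_apply, pderiv_hermStar, evalAtHom_hermStar,
    Sum.swap_inr]

lemma antiholGrad_hol (a : Fin n → ℂ) (p : MvPolynomial (Fin n) ℂ) :
    antiholGrad a (hol n p) = 0 := by
  ext k
  simp only [antiholGrad_apply, pderiv_inr_hol, map_zero, Pi.zero_apply]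

lemma mixedHessian_hol (a : Fin n → ℂ) (p : MvPolynomial (Fin n) ℂ) :
    mixedHessian a (hol n p) = 0 := by
  ext j k
  simp only [mixedHessian_apply, pderiv_inl_hol, pderiv_inr_hol, map_zero, Matrix.zero_apply]

lemma mixedHessian_hermStar_hol (a : Fin n → ℂ) (p : MvPolynomial (Fin n) ℂ) :
    mixedHessian a (hermStar n (hol n p)) = 0 := by
  ext j k
  simp only [mixedHessian_apply, pderiv_hermStar, Sum.swap_inl, pderiv_inr_hol, map_zero,
    Matrix.zero_apply]

lemma holGrad_twoRe (a : Fin n → ℂ) (p : MvPolynomial (Fin n) ℂ) :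
    holGrad a (twoRe p) = holGrad a (hol n p) := by
  rw [twoRe, map_add, holGrad_hermStar, antiholGrad_hol, star_zero, add_zero]

lemma antiholGrad_twoRe (a : Fin n → ℂ) (p : MvPolynomial (Fin n) ℂ) :
    antiholGrad a (twoRe p) = star (holGrad a (hol n p)) := by
  rw [twoRe, map_add, antiholGrad_hermStar, antiholGrad_hol, zero_add]

lemma mixedHessian_twoRe (a : Fin n → ℂ) (p : MvPolynomial (Fin n) ℂ) :
    mixedHessian a (twoRe p) = 0 := by
  rw [twoRe, map_add, mixedHessian_hol, mixedHessian_hermStar_hol, add_zero]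

lemma trace_mul_vecMulVec {m R : Type*} [Fintype m] [CommSemiring R] (U : Matrix m m R)
    (v w : m → R) : (U * vecMulVec v w).trace = w ⬝ᵥ (U *ᵥ v) := by
  rw [mul_vecMulVec, trace_vecMulVec, dotProduct_comm]

lemma dotProduct_map_conj_mulVec_star {m R : Type*} [Fintype m] [CommSemiring R] [StarRing R]
    {U : Matrix m m R} (hU : U.IsHermitian) (v w : m → R) :
    v ⬝ᵥ (U.map (starRingEnd R) *ᵥ star w) = star w ⬝ᵥ (U *ᵥ v) := by
  have hmap : U.map (starRingEnd R) = Uᵀ := by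
    ext i j
    exact hU.apply j i
  rw [hmap, mulVec_transpose, dotProduct_comm, dotProduct_mulVec]

lemma exists_diag_pos_of_posSemidef {m 𝕜 : Type*} [Finite m] [RCLike 𝕜] {U : Matrix m m 𝕜}
    (hU : U.PosSemidef) (hU0 : U ≠ 0) : ∃ j, 0 < U j j := by
  have := Fintype.ofFinite m
  obtain ⟨j, -, hj⟩ := Finset.exists_ne_zero_of_sum_ne_zero (mt hU.trace_eq_zero_iff.mp hU0)
  exact ⟨j, hU.diag_nonneg.lt_of_ne' hj⟩

lemma mem_Jau_iff {a : Fin n → ℂ} {U : Matrix (Fin n) (Fin n) ℂ} {f : CPoly n} :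
    f ∈ Jau a U ↔ evalAtHom a f = 0 ∧ U *ᵥ holGrad a f = 0 ∧
      U.map (starRingEnd ℂ) *ᵥ antiholGrad a f = 0 ∧ (U * mixedHessian a f).trace = 0 :=
  Iff.rfl

/-- The combination of the conditions defining `J(a,U)` for which the value at `|p|²` is `w* U w`
with `w = ∇p(a) + p(a) v`. -/
def jetFunctional (a : Fin n → ℂ) (U : Matrix (Fin n) (Fin n) ℂ) (v : Fin n → ℂ) :
    CPoly n →ₗ[ℂ] ℂ where
  toFun f := (U * mixedHessian a f).trace + star v ⬝ᵥ (U *ᵥ holGrad a f) +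
    v ⬝ᵥ (U.map (starRingEnd ℂ) *ᵥ antiholGrad a f) + evalAtHom a f * (star v ⬝ᵥ (U *ᵥ v))
  map_add' f g := by
    simp only [map_add, mul_add, trace_add, mulVec_add, dotProduct_add]
    ring
  map_smul' c f := by
    simp only [map_smul, trace_smul, mulVec_smul, dotProduct_smul, smul_eq_mul,
      RingHom.id_apply, Matrix.mul_smul]
    ring

lemma jetFunctional_apply (a : Fin n → ℂ) (U : Matrix (Fin n) (Fin n) ℂ) (v : Fin n → ℂ)
    (f : CPoly n) :
    jetFunctional a U v f = (U * mixedHessian a f).trace + star v ⬝ᵥ (U *ᵥ holGrad a f) +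
      v ⬝ᵥ (U.map (starRingEnd ℂ) *ᵥ antiholGrad a f) +
        evalAtHom a f * (star v ⬝ᵥ (U *ᵥ v)) := rfl

lemma jetFunctional_eq_zero {a : Fin n → ℂ} {U : Matrix (Fin n) (Fin n) ℂ} (v : Fin n → ℂ)
    {g : CPoly n} (hg : g ∈ Jau a U) : jetFunctional a U v g = 0 := by
  obtain ⟨hval, hgrad, hantigrad, hhess⟩ := mem_Jau_iff.mp hg
  simp only [jetFunctional_apply, hval, hgrad, hantigrad, hhess, dotProduct_zero, zero_mul,
    add_zero]

lemma jetFunctional_hol_mul_hermStar (a : Fin n → ℂ) {U : Matrix (Fin n) (Fin n) ℂ}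
    (hU : U.IsHermitian) (v : Fin n → ℂ) (p : MvPolynomial (Fin n) ℂ) :
    jetFunctional a U v (hol n p * hermStar n (hol n p)) =
      star (holGrad a (hol n p) + evalAtHom a (hol n p) • v) ⬝ᵥ
        (U *ᵥ (holGrad a (hol n p) + evalAtHom a (hol n p) • v)) := by
  simp only [jetFunctional_apply, holGrad_mul, antiholGrad_mul, mixedHessian_mul, map_mul,
    holGrad_hermStar, antiholGrad_hermStar, antiholGrad_hol, mixedHessian_hol,
    mixedHessian_hermStar_hol, evalAtHom_hermStar, star_zero, smul_zero, zero_add, add_zero,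
    vecMulVec_zero, trace_mul_vecMulVec, mulVec_add, mulVec_smul, dotProduct_add, add_dotProduct,
    dotProduct_smul, smul_dotProduct, star_add, star_smul, smul_eq_mul,
    dotProduct_map_conj_mulVec_star hU]
  ring

lemma jetFunctional_twoRe_mul_self {a : Fin n → ℂ} {U : Matrix (Fin n) (Fin n) ℂ}
    (hU : U.IsHermitian) {p : MvPolynomial (Fin n) ℂ} (hval : evalAtHom a (twoRe p) = -1) :
    jetFunctional a U (holGrad a (hol n p)) (twoRe p * twoRe p) =
      -(star (holGrad a (hol n p)) ⬝ᵥ (U *ᵥ holGrad a (hol n p))) := by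
  simp only [jetFunctional_apply, holGrad_mul, antiholGrad_mul, mixedHessian_mul, map_mul, hval,
    holGrad_twoRe, antiholGrad_twoRe, mixedHessian_twoRe, smul_zero, zero_add, mul_add, trace_add,
    trace_mul_vecMulVec, mulVec_add, mulVec_smul, dotProduct_add, dotProduct_smul, smul_eq_mul,
    dotProduct_map_conj_mulVec_star hU]
  ring

lemma exists_pos_not_mem_SigmaHPlus_of_subset_Jau {I : Set (CPoly n)} {a : Fin n → ℂ}
    {U : Matrix (Fin n) (Fin n) ℂ} (hU : U.PosSemidef) (hU0 : U ≠ 0) (hI : I ⊆ Jau a U) :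
    ∃ f : CPoly n, hermStar n f = f ∧ (∀ x, 0 < (evalAt x f).re) ∧ f ∉ SigmaHPlus n I := by
  obtain ⟨j, hj⟩ := exists_diag_pos_of_posSemidef hU hU0
  let p : MvPolynomial (Fin n) ℂ := X j - C (a j + 1 / 2)
  have hval : evalAtHom a (twoRe p) = -1 := by
    have hp : aeval a p = -(1 / 2) := by simp [p]
    rw [evalAtHom, evalPairHom_twoRe, hp]
    norm_num [Complex.ext_iff]
  have hgrad : holGrad a (hol n p) = Pi.single j 1 := by
    ext k
    simp [p, holGrad_apply, pderiv_inl_hol, pderiv_X, Pi.single_apply, eq_comm, apply_ite]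
  refine exists_pos_not_mem_SigmaHPlus (jetFunctional a U (holGrad a (hol n p))) (fun r => ?_)
    (fun g hg => jetFunctional_eq_zero _ (hI hg)) (hermStar_twoRe p) ?_
  · rw [jetFunctional_hol_mul_hermStar a hU.isHermitian]
    exact hU.dotProduct_mulVec_nonneg _
  · rw [jetFunctional_twoRe_mul_self hU.isHermitian hval, hgrad]
    simpa using (Complex.lt_def.mp hj).1

end Jet

theorem statement6_general {I : Set (CPoly n)}
    (h : (∃ a b : Fin n → ℂ, a ≠ b ∧ I ⊆ Iab a b) ∨
      ∃ (a : Fin n → ℂ) (U : Matrix (Fin n) (Fin n) ℂ),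
        U.PosSemidef ∧ U ≠ 0 ∧ I ⊆ Jau a U) :
    ∃ f : CPoly n, hermStar n f = f ∧ (∀ x, 0 < (evalAt x f).re) ∧ f ∉ SigmaHPlus n I := by
  rcases h with ⟨a, b, hab, hI⟩ | ⟨a, U, hU, hU0, hI⟩
  · exact exists_pos_not_mem_SigmaHPlus_of_subset_Iab hab hI
  · exact exists_pos_not_mem_SigmaHPlus_of_subset_Jau hU hU0 hI

/-- Corollary `idtheorobst`: if an ideal `I ⊆ ℝ[x,y]` is contained in some `I(a,b)`
(`a ≠ b`) or in some `J(a,U)` (`U ≠ 0` psd hermitian), then some `f ∈ ℝ[x,y]` is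
strictly positive on `V_ℝ(I)` but is not a sum of hermitian squares modulo `I`. -/
theorem statement6 (n : ℕ) (hn : 0 < n) (I : Set (CPoly n)) (hI : IsRealIdeal n I)
    (h : (∃ a b : Fin n → ℂ, a ≠ b ∧ I ⊆ Iab a b) ∨
      ∃ (a : Fin n → ℂ) (U : Matrix (Fin n) (Fin n) ℂ),
        U.PosSemidef ∧ U ≠ 0 ∧ I ⊆ Jau a U) :
    ∃ f : CPoly n, hermStar n f = f ∧ (∀ a ∈ VR n I, 0 < (evalAt a f).re) ∧
      f ∉ SigmaHPlus n I :=
  let ⟨f, hf, hpos, hmem⟩ := statement6_general h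
  ⟨f, hf, fun a _ => hpos a, hmem⟩

end
end

section
/- Let n ≥ 1 and 0 < ε < 1. Then the polynomial ε + (1 − ‖z‖²)² (where ‖z‖² := |z_1|² + ⋯ + |z_n|²) does not belong to the hermitian module M = Σ_h + Σ_h·(1 − ‖z‖²); that is, there exist no p, q ∈ Σ_h with ε + (1 − ‖z‖²)² = p + q·(1 − ‖z‖²), even though this polynomial is strictly positive on the closed unit ball X_M and M is archimedean. -/
open MvPolynomial Complex Matrix MeasureTheory ComplexOrder

noncomputable section

universe u

/-!
Let `T` be the tuple whose `j`-th entry is a nilpotent `2 × 2` Jordan block `v₁ ↦ v₂ ↦ 0` and whose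
other entries vanish, and let `L f = ⟨ψ_T(f) v₁, v₁⟩`, which is the coefficient of `1` in `f` plus
that of `z_j z̄_j`. Since `∑ T_i* T_i ≤ 1`, the functional `L` is nonnegative on
`Σ_h + Σ_h (1 - ‖z‖²)`; concretely, `L (q (1 - ‖z‖²))` is the `z_j z̄_j`-coefficient of `q`.
Since `T` is not subnormal, positivity on the ball does not force `L f ≥ 0`, and indeed
`L (ε + (1 - ‖z‖²)²) = ε - 1 < 0`.
-/

lemma coeff_rename_inl_mul_rename_inr {σ τ R : Type*} [CommSemiring R] (p : MvPolynomial σ R)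
    (q : MvPolynomial τ R) (α : σ →₀ ℕ) (β : τ →₀ ℕ) :
    coeff (α.sumElim β) (rename Sum.inl p * rename Sum.inr q) = coeff α p * coeff β q := by
  classical
  have sumElim_eq_iff (a : σ →₀ ℕ) (b : τ →₀ ℕ) :
      a.sumElim b = α.sumElim β ↔ a = α ∧ b = β := by
    simp only [DFunLike.ext_iff, Sum.forall, Finsupp.sumElim_inl, Finsupp.sumElim_inr]
  induction p using MvPolynomial.induction_on' with
  | add p₁ p₂ h₁ h₂ => simp only [map_add, add_mul, coeff_add, h₁, h₂]
  | monomial a r =>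
    induction q using MvPolynomial.induction_on' with
    | add q₁ q₂ h₁ h₂ => simp only [map_add, mul_add, coeff_add, h₁, h₂]
    | monomial b s =>
      rw [rename_monomial, rename_monomial, monomial_mul, ← Finsupp.sumElim_eq_add]
      simp only [coeff_monomial, sumElim_eq_iff, ite_and, mul_ite, ite_mul, mul_zero, zero_mul]
      split_ifs <;> rfl

lemma hermStar_hol {n : ℕ} (p : MvPolynomial (Fin n) ℂ) :
    hermStar n (hol n p) = rename Sum.inr (map (starRingEnd ℂ) p) := by
  simp [hermStar, hol, map_rename, rename_rename, Function.comp_def]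

lemma coeff_hol_mul_hermStar_hol {n : ℕ} (p q : MvPolynomial (Fin n) ℂ) (α β : Fin n →₀ ℕ) :
    coeff (α.sumElim β) (hol n p * hermStar n (hol n q)) =
      coeff α p * starRingEnd ℂ (coeff β q) := by
  rw [hermStar_hol, hol, coeff_rename_inl_mul_rename_inr, coeff_map]

lemma coeff_sumElim_self_nonneg_of_mem_sigmaH {n : ℕ} {f : CPoly n} (hf : f ∈ SigmaH n)
    (α : Fin n →₀ ℕ) : 0 ≤ coeff (α.sumElim α) f := by
  obtain ⟨k, p, rfl⟩ := hf
  rw [coeff_sum]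
  refine Finset.sum_nonneg fun i _ ↦ ?_
  rw [coeff_hol_mul_hermStar_hol]
  exact mul_star_self_nonneg _

/-- The exponent of the monomial `|z_j|² = z_j z̄_j`, with `z` and `z̄` indexed by the left and the
right copy of `σ`. -/
def normSqExponent {σ : Type*} (j : σ) : σ ⊕ σ →₀ ℕ :=
  (Finsupp.single j 1).sumElim (Finsupp.single j 1)

lemma normSqExponent_ne_zero {σ : Type*} (j : σ) : normSqExponent j ≠ 0 := fun h ↦ by
  simpa [normSqExponent] using DFunLike.congr_fun h (Sum.inl j)

lemma normSqExponent_le_normSqExponent_iff {σ : Type*} {i j : σ} :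
    normSqExponent i ≤ normSqExponent j ↔ i = j := by
  refine ⟨fun h ↦ ?_, fun h ↦ h ▸ le_rfl⟩
  have h_inl := h (Sum.inl i)
  by_contra hij
  simp [normSqExponent, Ne.symm hij] at h_inl

lemma normZ_eq_sum_monomial (n : ℕ) : normZ n = ∑ j, monomial (normSqExponent j) 1 := by
  simp only [normZ, X, monomial_mul, normSqExponent, Finsupp.sumElim_single_single, mul_one]

lemma coeff_mul_normZ {n : ℕ} (f : CPoly n) (m : Fin n ⊕ Fin n →₀ ℕ) :
    coeff m (f * normZ n) =
      ∑ j, if normSqExponent j ≤ m then coeff (m - normSqExponent j) f else 0 := by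
  simp only [normZ_eq_sum_monomial, Finset.mul_sum, coeff_sum, coeff_mul_monomial', mul_one]

lemma coeff_zero_mul_normZ {n : ℕ} (f : CPoly n) : coeff 0 (f * normZ n) = 0 := by
  simp only [coeff_mul_normZ, nonpos_iff_eq_zero, normSqExponent_ne_zero, if_false,
    Finset.sum_const_zero]

lemma coeff_normSqExponent_mul_normZ {n : ℕ} (f : CPoly n) (j : Fin n) :
    coeff (normSqExponent j) (f * normZ n) = coeff 0 f := by
  simp only [coeff_mul_normZ, normSqExponent_le_normSqExponent_iff, Finset.sum_ite_eq',
    Finset.mem_univ, if_true, tsub_self]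

/-- The vector state `f ↦ ⟨ψ_T(f) v₁, v₁⟩` of the hereditary calculus at the tuple `T` whose `j`-th
entry is the nilpotent Jordan block `v₁ ↦ v₂ ↦ 0` and whose other entries vanish. It is encoded as
the sum of the coefficients of `1` and of `z_j z̄_j`, the only monomials on which it is nonzero. -/
def jordanBlockState {n : ℕ} (j : Fin n) : CPoly n →ₗ[ℂ] ℂ :=
  lcoeff ℂ 0 + lcoeff ℂ (normSqExponent j)

lemma jordanBlockState_apply {n : ℕ} (j : Fin n) (f : CPoly n) :
    jordanBlockState j f = coeff 0 f + coeff (normSqExponent j) f :=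
  rfl

lemma jordanBlockState_C {n : ℕ} (j : Fin n) (c : ℂ) : jordanBlockState j (C c) = c := by
  rw [jordanBlockState_apply, coeff_zero_C, coeff_C_of_ne_zero (normSqExponent_ne_zero j), add_zero]

lemma jordanBlockState_mul_one_sub_normZ {n : ℕ} (j : Fin n) (f : CPoly n) :
    jordanBlockState j (f * (1 - normZ n)) = coeff (normSqExponent j) f := by
  rw [jordanBlockState_apply, mul_one_sub, coeff_sub, coeff_sub, coeff_zero_mul_normZ,
    coeff_normSqExponent_mul_normZ]
  ring

lemma jordanBlockState_one_sub_normZ_sq {n : ℕ} (j : Fin n) :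
    jordanBlockState j ((1 - normZ n) ^ 2) = -1 := by
  have coeff_normZ : coeff (normSqExponent j) (normZ n) = 1 := by
    simpa only [one_mul, coeff_zero_one] using coeff_normSqExponent_mul_normZ 1 j
  rw [sq, jordanBlockState_mul_one_sub_normZ, coeff_sub, coeff_normZ, ← C_1,
    coeff_C_of_ne_zero (normSqExponent_ne_zero j), zero_sub]

lemma jordanBlockState_nonneg {n : ℕ} (j : Fin n) {p q : CPoly n} (hp : p ∈ SigmaH n)
    (hq : q ∈ SigmaH n) : 0 ≤ jordanBlockState j (p + q * (1 - normZ n)) := by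
  have coeff_zero_nonneg : 0 ≤ coeff 0 p := by
    simpa only [Finsupp.sumElim_zero_zero] using coeff_sumElim_self_nonneg_of_mem_sigmaH hp 0
  rw [map_add, jordanBlockState_mul_one_sub_normZ, jordanBlockState_apply]
  exact add_nonneg
    (add_nonneg coeff_zero_nonneg (coeff_sumElim_self_nonneg_of_mem_sigmaH hp _))
    (coeff_sumElim_self_nonneg_of_mem_sigmaH hq _)

/-- Example `pssarchhermmod`: for `0 < ε < 1`, the polynomial `ε + (1 - ‖z‖²)²` is not
in the hermitian module `Σ_h + Σ_h·(1 - ‖z‖²)`. -/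
theorem statement13 (n : ℕ) (hn : 0 < n) (ε : ℝ) (hε0 : 0 < ε) (hε1 : ε < 1) :
    ¬ ∃ p ∈ SigmaH n, ∃ q ∈ SigmaH n,
      C (ε : ℂ) + (1 - normZ n) ^ 2 = p + q * (1 - normZ n) := by
  rintro ⟨p, hp, q, hq, h⟩
  let j : Fin n := ⟨0, hn⟩
  have state_nonneg : 0 ≤ jordanBlockState j (C (ε : ℂ) + (1 - normZ n) ^ 2) :=
    h ▸ jordanBlockState_nonneg j hp hq
  rw [map_add, jordanBlockState_C, jordanBlockState_one_sub_normZ_sq] at state_nonneg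
  have eps_sub_one_nonneg : 0 ≤ ε + -1 := by exact_mod_cast state_nonneg
  linarith

end
end
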